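/- arXiv:2006.08669 — 4 statements merged into one kernel-verified Lean document; each statement's English description precedes it below -/
import Mathlib

section
/- Theorem 1 (performance guarantee of the online attack algorithm). Let (θ_0,…,θ_{T−1}) in Θ and (z_0,…,z_{T−1}) in F be an attack trace, i.e. for every t < T the point z_t maximizes h(θ_t, ·) over F, and define its regret as Regret(T) := ∑_{t<T} g_{z_t}(θ_t) − inf_{θ∈Θ} ∑_{t<T} g_{z_t}(θ). Then the produced poisoning sequence D* := (z_0,…,z_{T−1}) satisfies M* − M(D*) ≤ Regret(T)/T. -/
open scoped BigOperators

/-- Theorem 1 (performance guarantee of the online attack algorithm).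
If `(θs, zs)` is an attack trace (each `zs t` maximizes `h (θs t) ·` over the feasible
set `F`), then the produced poisoning sequence `zs` satisfies
`M* − M(zs) ≤ Regret(T) / T`. -/
theorem attack_regret_guarantee
    {Θ P : Type*} [Nonempty Θ]
    (ℓ Δ : Θ → P → ℝ)
    (hℓ : ∀ θ z, 0 ≤ ℓ θ z) (hΔ : ∀ θ z, 0 ≤ Δ θ z)
    (Dc : Multiset P) (hDc : Dc ≠ 0) (n : ℕ) (hn : Multiset.card Dc = n)
    (F : Finset P) (hF : F.Nonempty)
    (T : ℕ) (hT : 0 < T)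
    (ε lam : ℝ) (hε : ε = (T : ℝ) / n) (hlam : 0 ≤ lam)
    -- per-model average clean loss
    (b : Θ → ℝ) (hb : ∀ θ, b θ = (1 / (n : ℝ)) * (Dc.map (ℓ θ)).sum)
    -- per-point penalized contribution
    (h : Θ → P → ℝ) (hh : ∀ θ z, h θ z = ε * ℓ θ z + lam * Δ θ z)
    (g : P → Θ → ℝ) (hg : ∀ z θ, g z θ = b θ + h θ z)
    -- penalized attack objective of a poisoning sequence
    (Φ : (Fin T → F) → Θ → ℝ)
    (hΦ : ∀ D θ, Φ D θ = (1 / (T : ℝ)) * ∑ t, g (D t) θ)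
    -- its value, and the optimal attack value
    (M : (Fin T → F) → ℝ) (hM : ∀ D, M D = ⨅ θ : Θ, Φ D θ)
    (Mstar : ℝ) (hMstar : Mstar = ⨆ D : Fin T → F, M D)
    -- the attack trace
    (θs : Fin T → Θ) (zs : Fin T → F)
    (htrace : ∀ t : Fin T, ∀ w ∈ F, h (θs t) w ≤ h (θs t) (zs t))
    -- regret of the online algorithm
    (Regret : ℝ)
    (hReg : Regret = (∑ t, g (zs t) (θs t)) - ⨅ θ : Θ, ∑ t, g (zs t) θ) :
    Mstar - M zs ≤ Regret / T := by
  have hT' : (0 : ℝ) < T := by exact_mod_cast hT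
  have hε0 : 0 ≤ ε := by rw [hε]; positivity
  have hb0 : ∀ θ, 0 ≤ b θ := by
    intro θ
    rw [hb]
    refine mul_nonneg (by positivity) (Multiset.sum_nonneg ?_)
    intro x hx
    obtain ⟨z, -, rfl⟩ := Multiset.mem_map.1 hx
    exact hℓ θ z
  have hg0 : ∀ z θ, 0 ≤ g z θ := by
    intro z θ
    rw [hg, hh]
    have h1 := mul_nonneg hε0 (hℓ θ z)
    have h2 := mul_nonneg hlam (hΔ θ z)
    have h3 := hb0 θ
    linarith
  have hΦ0 : ∀ D θ, 0 ≤ Φ D θ := by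
    intro D θ
    rw [hΦ]
    exact mul_nonneg (by positivity) (Finset.sum_nonneg fun t _ => hg0 _ _)
  have hMle : ∀ D θ, M D ≤ Φ D θ := by
    intro D θ
    rw [hM]
    exact ciInf_le ⟨0, by rintro _ ⟨x, rfl⟩; exact hΦ0 D x⟩ θ
  have hstep : ∀ D s, M D ≤ g (zs s) (θs s) := by
    intro D s
    refine (hMle D (θs s)).trans ?_
    have hsum : ∑ t, g (D t) (θs s) ≤ ∑ _t : Fin T, g (zs s) (θs s) := by
      refine Finset.sum_le_sum fun t _ => ?_
      rw [hg, hg]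
      have := htrace s (D t) (D t).2
      linarith
    rw [Finset.sum_const, Finset.card_univ, Fintype.card_fin, nsmul_eq_mul] at hsum
    rw [hΦ, one_div, inv_mul_le_iff₀ hT']
    exact hsum
  have hub : Mstar ≤ (∑ t, g (zs t) (θs t)) / T := by
    haveI : Nonempty (Fin T → F) := ⟨zs⟩
    rw [hMstar]
    refine ciSup_le fun D => ?_
    rw [le_div_iff₀ hT']
    have hsum : ∑ _t : Fin T, M D ≤ ∑ t, g (zs t) (θs t) :=
      Finset.sum_le_sum fun t _ => hstep D t
    rw [Finset.sum_const, Finset.card_univ, Fintype.card_fin, nsmul_eq_mul] at hsum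
    linarith
  have hMz : M zs = (⨅ θ : Θ, ∑ t, g (zs t) θ) / T := by
    rw [hM, div_eq_inv_mul, Real.mul_iInf_of_nonneg (by positivity)]
    simp only [hΦ, one_div]
  rw [hMz, hReg, sub_div]
  linarith
end

section
/- Certification by the played losses: if (θ_0,…,θ_{T−1}) in Θ and (z_0,…,z_{T−1}) in F form an attack trace, i.e. for every t < T the point z_t maximizes h(θ_t,·) over F, then the optimal attack value satisfies M* ≤ (1/T)·∑_{t<T} g_{z_t}(θ_t). -/
open scoped BigOperators

/-- Certification by the played losses: if `(θs, zs)` is an attack trace (each `zs t`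
maximizes `h (θs t) ·` over `F`), then `M* ≤ (1/T) ∑_{t<T} g (zs t) (θs t)`. -/
theorem attack_value_le_played_losses
    {Θ P : Type*} [Nonempty Θ]
    (ℓ Δ : Θ → P → ℝ)
    (hℓ : ∀ θ z, 0 ≤ ℓ θ z) (hΔ : ∀ θ z, 0 ≤ Δ θ z)
    (Dc : Multiset P) (hDc : Dc ≠ 0) (n : ℕ) (hn : Multiset.card Dc = n)
    (F : Finset P) (hF : F.Nonempty)
    (T : ℕ) (hT : 0 < T)
    (ε lam : ℝ) (hε : ε = (T : ℝ) / n) (hlam : 0 ≤ lam)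
    (b : Θ → ℝ) (hb : ∀ θ, b θ = (1 / (n : ℝ)) * (Dc.map (ℓ θ)).sum)
    (h : Θ → P → ℝ) (hh : ∀ θ z, h θ z = ε * ℓ θ z + lam * Δ θ z)
    (g : P → Θ → ℝ) (hg : ∀ z θ, g z θ = b θ + h θ z)
    (Φ : (Fin T → F) → Θ → ℝ)
    (hΦ : ∀ D θ, Φ D θ = (1 / (T : ℝ)) * ∑ t, g (D t) θ)
    (M : (Fin T → F) → ℝ) (hM : ∀ D, M D = ⨅ θ : Θ, Φ D θ)
    (Mstar : ℝ) (hMstar : Mstar = ⨆ D : Fin T → F, M D)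
    (θs : Fin T → Θ) (zs : Fin T → F)
    (htrace : ∀ t : Fin T, ∀ w ∈ F, h (θs t) w ≤ h (θs t) (zs t)) :
    Mstar ≤ (1 / (T : ℝ)) * ∑ t, g (zs t) (θs t) := by
  have hTR : (0 : ℝ) < T := by exact_mod_cast hT
  have hg0 : ∀ z θ, 0 ≤ g z θ := by
    intro z θ
    rw [hg, hb, hh, hε]
    have h1 : 0 ≤ (Dc.map (ℓ θ)).sum := by
      apply Multiset.sum_nonneg
      intro x hx
      obtain ⟨a, _, rfl⟩ := Multiset.mem_map.1 hx
      exact hℓ θ a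
    have h2 := hℓ θ z
    have h3 := hΔ θ z
    positivity
  haveI : Nonempty (Fin T → F) := ⟨zs⟩
  rw [hMstar]
  apply ciSup_le
  intro D
  have key : ∀ s, M D ≤ g (zs s) (θs s) := by
    intro s
    have hbdd : BddBelow (Set.range (Φ D)) := by
      refine ⟨0, ?_⟩
      rintro _ ⟨θ, rfl⟩
      rw [hΦ]
      exact mul_nonneg (by positivity) (Finset.sum_nonneg fun t _ => hg0 _ _)
    have h1 : M D ≤ Φ D (θs s) := by
      rw [hM]
      exact ciInf_le hbdd (θs s)
    have h2 : ∑ t, g (D t) (θs s) ≤ T * g (zs s) (θs s) := by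
      have := Finset.sum_le_card_nsmul Finset.univ (fun t => g (D t) (θs s)) (g (zs s) (θs s))
        (fun t _ => by
          simp only [hg]
          have := htrace s (D t) (D t).2
          linarith)
      simpa using this
    rw [hΦ, one_div, inv_mul_eq_div] at h1
    refine h1.trans ?_
    rw [div_le_iff₀ hTR]
    linarith
  have h3 := Finset.card_nsmul_le_sum Finset.univ (fun s => g (zs s) (θs s)) (M D)
    (fun s _ => key s)
  rw [one_div, inv_mul_eq_div, le_div_iff₀ hTR]
  simp only [Finset.card_univ, Fintype.card_fin, nsmul_eq_mul] at h3
  linarith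
end

section
/- Corollary 1 (near-optimality of the attack under convexity). Suppose θ_0 ∈ K and, for each t < T, z_t maximizes h(θ_t,·) over F and θ_{t+1} is the point of K closest (in norm) to θ_t − η_{t+1}·∇g_{z_t}(θ_t), where the step sizes are η_t := d/(G·√t). Then the produced poisoning sequence D* := (z_0,…,z_{T−1}) satisfies M* − M(D*) ≤ 3·G·d/√T. -/
open scoped BigOperators

lemma aux_first_order {E : Type*} [NormedAddCommGroup E] [InnerProductSpace ℝ E]
    [CompleteSpace E] (f : E → ℝ) (hc : ConvexOn ℝ Set.univ f) (hd : Differentiable ℝ f)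
    (x u : E) : f x - f u ≤ inner ℝ (gradient f x) (x - u) := by
  have hgd : HasGradientAt f (gradient f x) x := (hd x).hasGradientAt
  have hφc : ConvexOn ℝ Set.univ (fun t : ℝ => f (AffineMap.lineMap x u t)) := by
    have := hc.comp_affineMap (AffineMap.lineMap x u : ℝ →ᵃ[ℝ] E)
    rw [Set.preimage_univ] at this
    exact this
  have hφd : HasDerivAt (fun t : ℝ => f (AffineMap.lineMap x u t))
      (inner ℝ (gradient f x) (u - x)) 0 := by
    have h1 : HasDerivAt (fun t : ℝ => (AffineMap.lineMap x u t : E)) (u - x) 0 :=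
      AffineMap.hasDerivAt_lineMap
    have h2 : HasFDerivAt f (InnerProductSpace.toDual ℝ E (gradient f x))
        (AffineMap.lineMap x u (0 : ℝ)) := by
      simpa using hgd.hasFDerivAt
    have := h2.comp_hasDerivAt (0 : ℝ) h1
    rw [InnerProductSpace.toDual_apply_apply] at this
    exact this
  have := hφc.le_slope_of_hasDerivAt (Set.mem_univ (0:ℝ)) (Set.mem_univ (1:ℝ)) one_pos hφd
  simp only [slope_def_field, AffineMap.lineMap_apply_zero, AffineMap.lineMap_apply_one,
    sub_zero, div_one] at this
  have h3 : inner ℝ (gradient f x) (x - u) = - inner ℝ (gradient f x) (u - x) := by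
    rw [← inner_neg_right, neg_sub]
  linarith

lemma aux_proj {E : Type*} [NormedAddCommGroup E] [InnerProductSpace ℝ E]
    (K : Set E) (hK : Convex ℝ K) (p v u : E) (hv : v ∈ K) (hu : u ∈ K)
    (h : ∀ y ∈ K, ‖v - p‖ ≤ ‖y - p‖) : ‖v - u‖ ^ 2 ≤ ‖p - u‖ ^ 2 := by
  have h1 : ‖p - v‖ = ⨅ w : K, ‖p - w‖ := by
    have : Nonempty K := ⟨⟨v, hv⟩⟩
    apply le_antisymm
    · apply le_ciInf
      intro w
      rw [norm_sub_rev p v, norm_sub_rev p w]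
      exact h w w.2
    · exact ciInf_le (f := fun w : K => ‖p - w‖)
        ⟨0, by rintro _ ⟨w, rfl⟩; exact norm_nonneg _⟩ ⟨v, hv⟩
  have h2 := (norm_eq_iInf_iff_real_inner_le_zero hK hv).1 h1 u hu
  have h3 : p - u = (p - v) - (u - v) := by abel
  have h4 := norm_sub_sq_real (p - v) (u - v)
  rw [← h3] at h4
  rw [norm_sub_rev v u]
  nlinarith [sq_nonneg ‖p - v‖]

lemma aux_sum (G d : ℝ) (hG : 0 < G) (hd : 0 < d) (T : ℕ) (r a : ℕ → ℝ)
    (ha : ∀ t ≤ T, a t ≤ d ^ 2)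
    (hr : ∀ t < T, r t ≤ G / (2 * d) * √((t + 1 : ℕ) : ℝ) * (a t - a (t + 1))
      + G * d / (2 * √((t + 1 : ℕ) : ℝ))) :
    ∀ k ≤ T, ∑ t ∈ Finset.range k, r t + G / (2 * d) * √(k : ℝ) * a k
      ≤ 3 / 2 * (G * d) * √(k : ℝ) := by
  intro k
  induction k with
  | zero => intro _; simp
  | succ k ih =>
    intro hk
    have h1 := ih (by omega)
    have h2 := hr k (by omega)
    have h3 := ha k (by omega)
    rw [Finset.sum_range_succ]
    have hs : √(k : ℝ) ^ 2 = k := Real.sq_sqrt (by positivity)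
    have hs' : √((k + 1 : ℕ) : ℝ) ^ 2 = k + 1 := by
      rw [Real.sq_sqrt (by positivity)]; push_cast; ring
    have hx0 : 0 ≤ √(k : ℝ) := Real.sqrt_nonneg _
    have hy0 : 0 < √((k + 1 : ℕ) : ℝ) := Real.sqrt_pos.2 (by positivity)
    set x := √(k : ℝ)
    set y := √((k + 1 : ℕ) : ℝ)
    have hxy : x ≤ y := by nlinarith
    have h5 : G * d / (2 * y) ≤ G * d * (y - x) := by
      rw [div_le_iff₀ (by positivity)]
      have : 1 ≤ (y - x) * (2 * y) := by nlinarith [sq_nonneg (y - x)]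
      have h6 : 0 < G * d := by positivity
      nlinarith
    have h7 : G / (2 * d) * (y - x) * a k ≤ G / (2 * d) * (y - x) * d ^ 2 := by
      apply mul_le_mul_of_nonneg_left h3
      have : 0 ≤ y - x := by linarith
      positivity
    have h8 : G / (2 * d) * (y - x) * d ^ 2 = G * d * (y - x) / 2 := by
      field_simp
    linarith

/-- Corollary 1 (near-optimality of the attack under convexity): projected online gradient
descent with step sizes `η t = d / (G √t)`, combined with per-step maximization of `h` over
`F`, produces a poisoning sequence `zs` with `M* − M(zs) ≤ 3 G d / √T`. -/
theorem attack_near_optimal_of_convex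
    {E : Type*} [NormedAddCommGroup E] [InnerProductSpace ℝ E] [CompleteSpace E]
    {P : Type*}
    -- the parameter space: a nonempty closed convex set of diameter at most d
    (K : Set E) (hKne : K.Nonempty) (hKclosed : IsClosed K) (hKconv : Convex ℝ K)
    (d : ℝ) (hd : 0 < d) (hdiam : ∀ θ ∈ K, ∀ θ' ∈ K, ‖θ - θ'‖ ≤ d)
    -- loss and per-point fairness gap, nonnegative on K
    (ℓ Δ : E → P → ℝ)
    (hℓ : ∀ θ ∈ K, ∀ z, 0 ≤ ℓ θ z) (hΔ : ∀ θ ∈ K, ∀ z, 0 ≤ Δ θ z)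
    (Dc : Multiset P) (hDc : Dc ≠ 0) (n : ℕ) (hn : Multiset.card Dc = n)
    (F : Finset P) (hF : F.Nonempty)
    (T : ℕ) (hT : 0 < T)
    (ε lam : ℝ) (hε : ε = (T : ℝ) / n) (hlam : 0 ≤ lam)
    (b : E → ℝ) (hb : ∀ θ, b θ = (1 / (n : ℝ)) * (Dc.map (ℓ θ)).sum)
    (h : E → P → ℝ) (hh : ∀ θ z, h θ z = ε * ℓ θ z + lam * Δ θ z)
    (g : P → E → ℝ) (hg : ∀ z θ, g z θ = b θ + h θ z)
    -- each g z (extended to all of E) is convex and differentiable, with gradients bounded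
    -- in norm by G on K
    (hconv : ∀ z : P, ConvexOn ℝ Set.univ (g z))
    (hdiff : ∀ z : P, Differentiable ℝ (g z))
    (G : ℝ) (hG : 0 < G)
    (hgrad : ∀ z : P, ∀ θ ∈ K, ‖gradient (g z) θ‖ ≤ G)
    -- step sizes
    (η : ℕ → ℝ) (hη : ∀ t : ℕ, η t = d / (G * Real.sqrt t))
    -- penalized attack objective, its value, and the optimal attack value
    (Φ : (Fin T → F) → E → ℝ)
    (hΦ : ∀ D θ, Φ D θ = (1 / (T : ℝ)) * ∑ t, g (D t) θ)
    (M : (Fin T → F) → ℝ) (hM : ∀ D, M D = ⨅ θ : K, Φ D θ)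
    (Mstar : ℝ) (hMstar : Mstar = ⨆ D : Fin T → F, M D)
    -- the iterates of the algorithm
    (θs : ℕ → E) (zs : Fin T → F)
    (hθ0 : θs 0 ∈ K)
    (hmax : ∀ t : Fin T, ∀ w ∈ F, h (θs t) w ≤ h (θs t) (zs t))
    (hstep : ∀ t : Fin T, θs ((t : ℕ) + 1) ∈ K ∧
      ∀ y ∈ K,
        ‖θs ((t : ℕ) + 1) - (θs t - η ((t : ℕ) + 1) • gradient (g (zs t)) (θs t))‖ ≤
          ‖y - (θs t - η ((t : ℕ) + 1) • gradient (g (zs t)) (θs t))‖) :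
    Mstar - M zs ≤ 3 * G * d / Real.sqrt T := by
  have hTR : (0 : ℝ) < T := by exact_mod_cast hT
  have : Nonempty K := hKne.to_subtype
  have hn0 : (0:ℝ) ≤ ε := by rw [hε]; positivity
  have hθK : ∀ t ≤ T, θs t ∈ K := by
    intro t ht
    cases t with
    | zero => exact hθ0
    | succ t => exact (hstep ⟨t, by omega⟩).1
  have hg0 : ∀ z, ∀ θ ∈ K, 0 ≤ g z θ := by
    intro z θ hθ
    rw [hg, hb, hh]
    have h1 : 0 ≤ (Dc.map (ℓ θ)).sum := by
      apply Multiset.sum_nonneg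
      intro x hx
      obtain ⟨w, _, rfl⟩ := Multiset.mem_map.1 hx
      exact hℓ θ hθ w
    have h2 := hℓ θ hθ z
    have h3 := hΔ θ hθ z
    positivity
  have hΦ0 : ∀ D, ∀ θ ∈ K, 0 ≤ Φ D θ := by
    intro D θ hθ
    rw [hΦ]
    exact mul_nonneg (by positivity) (Finset.sum_nonneg fun t _ => hg0 _ _ hθ)
  have hML : ∀ D, ∀ θ ∈ K, M D ≤ Φ D θ := by
    intro D θ hθ
    rw [hM]
    exact ciInf_le (f := fun θ : K => Φ D θ)
      ⟨0, by rintro _ ⟨w, rfl⟩; exact hΦ0 D w w.2⟩ ⟨θ, hθ⟩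
  -- upper bound on the optimal value
  have hMt : ∀ D, ∀ t : Fin T, M D ≤ g (zs t) (θs t) := by
    intro D t
    refine (hML D _ (hθK t t.2.le)).trans ?_
    rw [hΦ, one_div, inv_mul_le_iff₀ hTR]
    have : ∑ s, g (D s) (θs t) ≤ ∑ s : Fin T, g (zs t) (θs t) := by
      apply Finset.sum_le_sum
      intro s _
      rw [hg, hg]
      linarith [hmax t (D s) (D s).2]
    simpa using this
  have hMs : Mstar ≤ (1 / (T : ℝ)) * ∑ t : Fin T, g (zs t) (θs t) := by
    have : Nonempty F := hF.to_subtype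
    rw [hMstar]
    apply ciSup_le
    intro D
    have : ∑ t : Fin T, M D ≤ ∑ t : Fin T, g (zs t) (θs t) :=
      Finset.sum_le_sum fun t _ => hMt D t
    rw [one_div, le_inv_mul_iff₀ hTR]
    simpa using this
  -- regret bound
  have hreg : ∀ u ∈ K, ∑ t : Fin T, (g (zs t) (θs t) - g (zs t) u)
      ≤ 3 / 2 * (G * d) * √(T : ℝ) := by
    intro u hu
    let r : ℕ → ℝ := fun t => if ht : t < T then
      g (zs ⟨t, ht⟩) (θs t) - g (zs ⟨t, ht⟩) u else 0
    have hsum : ∑ t : Fin T, (g (zs t) (θs t) - g (zs t) u) = ∑ t ∈ Finset.range T, r t := by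
      rw [← Fin.sum_univ_eq_sum_range]
      apply Finset.sum_congr rfl
      intro t _
      simp [r]
    have key := aux_sum G d hG hd T r (fun t => ‖θs t - u‖ ^ 2)
      (fun t ht => by
        have := hdiam _ (hθK t ht) u hu
        exact pow_le_pow_left₀ (norm_nonneg _) this 2)
      (fun t ht => by
        simp only [r, dif_pos ht]
        have h1 := aux_first_order _ (hconv (zs ⟨t, ht⟩)) (hdiff _) (θs t) u
        have h2 := hgrad (zs ⟨t, ht⟩) _ (hθK t ht.le)
        have h3 := aux_proj K hKconv _ _ u (hstep ⟨t, ht⟩).1 hu (hstep ⟨t, ht⟩).2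
        simp only at h3
        set v := gradient (g (zs ⟨t, ht⟩)) (θs t)
        have h4 : ‖θs t - η (t + 1) • v - u‖ ^ 2 = ‖θs t - u‖ ^ 2
            - 2 * (η (t + 1) * inner ℝ v (θs t - u)) + η (t + 1) ^ 2 * ‖v‖ ^ 2 := by
          have : θs t - η (t + 1) • v - u = (θs t - u) - η (t + 1) • v := by abel
          rw [this, norm_sub_sq_real, inner_smul_right, norm_smul, mul_pow,
            real_inner_comm, Real.norm_eq_abs, sq_abs]
        rw [h4, hη] at h3
        have hv2 : ‖v‖ ^ 2 ≤ G ^ 2 := pow_le_pow_left₀ (norm_nonneg _) h2 2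
        have hy0 : 0 < √((t + 1 : ℕ) : ℝ) := Real.sqrt_pos.2 (by positivity)
        set y := √((t + 1 : ℕ) : ℝ)
        refine h1.trans ?_
        set e := d / (G * y) with he
        have he0 : 0 < e := by positivity
        have e1 : G / (2 * d) * y = 1 / (2 * e) := by rw [he]; field_simp
        have e2 : G * d / (2 * y) = e * G ^ 2 / 2 := by rw [he]; field_simp
        rw [e1, e2]
        have h6 : e ^ 2 * ‖v‖ ^ 2 ≤ e ^ 2 * G ^ 2 :=
          mul_le_mul_of_nonneg_left hv2 (by positivity)
        have h7 : 1 / (2 * e) * (‖θs t - u‖ ^ 2 - ‖θs (t + 1) - u‖ ^ 2) + e * G ^ 2 / 2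
            = (‖θs t - u‖ ^ 2 - ‖θs (t + 1) - u‖ ^ 2 + e ^ 2 * G ^ 2) / (2 * e) := by
          field_simp
        rw [h7, le_div_iff₀ (by positivity)]
        linarith) T le_rfl
    rw [hsum]
    have : 0 ≤ G / (2 * d) * √(T : ℝ) * ‖θs T - u‖ ^ 2 := by positivity
    linarith
  have hs : 0 < √(T : ℝ) := Real.sqrt_pos.2 hTR
  have hss : √(T : ℝ) * √(T : ℝ) = T := Real.mul_self_sqrt hTR.le
  have hfin : Mstar - 3 * G * d / √(T : ℝ) ≤ M zs := by
    rw [hM]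
    apply le_ciInf
    rintro ⟨u, hu⟩
    have h1 := hreg u hu
    rw [Finset.sum_sub_distrib] at h1
    simp only [hΦ]
    have h2 : (1 / (T : ℝ)) * (∑ t : Fin T, g (zs t) (θs t) - ∑ t : Fin T, g (zs t) u)
        ≤ (1 / (T : ℝ)) * (3 / 2 * (G * d) * √(T : ℝ)) :=
      mul_le_mul_of_nonneg_left h1 (by positivity)
    have h3 : (1 / (T : ℝ)) * (3 / 2 * (G * d) * √(T : ℝ))
        = 3 / 2 * (G * d) / √(T : ℝ) := by
      field_simp
      nlinarith [hss]
    have h4 : 3 / 2 * (G * d) / √(T : ℝ) ≤ 3 * G * d / √(T : ℝ) := by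
      apply div_le_div_of_nonneg_right _ hs.le
      have : 0 < G * d := by positivity
      linarith
    rw [mul_sub] at h2
    linarith
  linarith
end

section
/- Regret bound for projected online gradient descent with step sizes η_t = d/(G√t): for every comparator y ∈ K, ∑_{t=1}^{T} f_t(x_t) − ∑_{t=1}^{T} f_t(y) ≤ 3·G·d·√T. (This is the bound Regret(T) ≤ 3Gd√T, i.e. Regret(T)/T ≤ 3Gd/√T, invoked in the proof of Corollary 1.) -/
open scoped BigOperators

lemma ogd_first_order {E : Type*} [NormedAddCommGroup E] [InnerProductSpace ℝ E] [CompleteSpace E]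
    (f : E → ℝ) (hc : ConvexOn ℝ Set.univ f) (hf : Differentiable ℝ f) (x y : E) :
    f x - f y ≤ inner ℝ (gradient f x) (x - y) := by
  have h1 : ConvexOn ℝ Set.univ (f ∘ (AffineMap.lineMap x y : ℝ →ᵃ[ℝ] E)) := by
    simpa using hc.comp_affineMap (AffineMap.lineMap x y : ℝ →ᵃ[ℝ] E)
  have h2 : HasFDerivAt f (InnerProductSpace.toDual ℝ E (gradient f x))
      ((AffineMap.lineMap x y : ℝ →ᵃ[ℝ] E) 0) := by
    simpa using (hf x).hasGradientAt.hasFDerivAt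
  have h3 := h2.comp_hasDerivAt (0 : ℝ) (AffineMap.hasDerivAt_lineMap (a := x) (b := y))
  have h4 := h1.le_slope_of_hasDerivAt (Set.mem_univ 0) (Set.mem_univ 1) one_pos h3
  rw [InnerProductSpace.toDual_apply_apply, slope_def_field] at h4
  simp only [Function.comp_apply, AffineMap.lineMap_apply_zero, AffineMap.lineMap_apply_one,
    sub_zero, div_one] at h4
  rw [← neg_sub y x, inner_neg_right]
  linarith

lemma ogd_step {E : Type*} [NormedAddCommGroup E] [InnerProductSpace ℝ E]
    (K : Set E) (hK : Convex ℝ K) (u v y : E) (hv : v ∈ K) (hy : y ∈ K)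
    (h : ∀ w ∈ K, ‖v - u‖ ≤ ‖w - u‖) : ‖v - y‖ ^ 2 ≤ ‖u - y‖ ^ 2 := by
  have h1 : ‖u - v‖ = ⨅ w : K, ‖u - w‖ := by
    have : Nonempty K := ⟨⟨v, hv⟩⟩
    apply le_antisymm
    · apply le_ciInf
      intro w
      rw [norm_sub_rev u v, norm_sub_rev u w]
      exact h w w.2
    · exact ciInf_le (f := fun w : K => ‖u - w‖)
        ⟨0, by rintro _ ⟨w, rfl⟩; exact norm_nonneg _⟩ ⟨v, hv⟩
  have h2 := (norm_eq_iInf_iff_real_inner_le_zero hK hv).1 h1 y hy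
  have h3 : u - y = (u - v) - (y - v) := by abel
  rw [h3, norm_sub_sq_real (u - v), norm_sub_rev v y]
  nlinarith [sq_nonneg ‖u - v‖]

/-- Regret bound for projected online gradient descent with step sizes `η t = d / (G √t)`:
for every comparator `y ∈ K`, `∑_{t=1}^T f t (x t) − ∑_{t=1}^T f t y ≤ 3 G d √T`. -/
theorem ogd_regret_bound
    {E : Type*} [NormedAddCommGroup E] [InnerProductSpace ℝ E] [CompleteSpace E]
    (K : Set E) (hKne : K.Nonempty) (hKclosed : IsClosed K) (hKconv : Convex ℝ K)
    (d : ℝ) (hd : 0 < d) (hdiam : ∀ x ∈ K, ∀ y ∈ K, ‖x - y‖ ≤ d)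
    (T : ℕ) (hT : 0 < T)
    (f : ℕ → E → ℝ)
    (hconv : ∀ t ∈ Finset.Icc 1 T, ConvexOn ℝ Set.univ (f t))
    (hdiff : ∀ t ∈ Finset.Icc 1 T, Differentiable ℝ (f t))
    (G : ℝ) (hG : 0 < G)
    (hgrad : ∀ t ∈ Finset.Icc 1 T, ∀ x ∈ K, ‖gradient (f t) x‖ ≤ G)
    (η : ℕ → ℝ) (hη : ∀ t : ℕ, η t = d / (G * Real.sqrt t))
    (x : ℕ → E) (hx1 : x 1 ∈ K)
    (hstep : ∀ t ∈ Finset.Icc 1 T, x (t + 1) ∈ K ∧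
      ∀ y ∈ K, ‖x (t + 1) - (x t - η t • gradient (f t) (x t))‖ ≤
        ‖y - (x t - η t • gradient (f t) (x t))‖)
    (y : E) (hy : y ∈ K) :
    (∑ t ∈ Finset.Icc 1 T, f t (x t)) - ∑ t ∈ Finset.Icc 1 T, f t y ≤
      3 * G * d * Real.sqrt T := by
  have hxK : ∀ t, 1 ≤ t → t ≤ T + 1 → x t ∈ K := by
    intro t h1 h2
    rcases Nat.lt_or_ge 1 t with h | h
    · obtain ⟨s, rfl⟩ : ∃ s, t = s + 1 := ⟨t - 1, by omega⟩
      exact (hstep s (Finset.mem_Icc.2 ⟨by omega, by omega⟩)).1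
    · have : t = 1 := by omega
      exact this ▸ hx1
  have key : ∀ n, n ≤ T → (∑ t ∈ Finset.Icc 1 n, (f t (x t) - f t y))
      + G * Real.sqrt n / (2 * d) * ‖x (n + 1) - y‖ ^ 2 ≤ 3 / 2 * G * d * Real.sqrt n := by
    intro n
    induction n with
    | zero => intro _; simp
    | succ n ih =>
      intro hn
      have ih := ih (by omega)
      have hm : n + 1 ∈ Finset.Icc 1 T := Finset.mem_Icc.2 ⟨by omega, hn⟩
      have hxm := hxK (n + 1) (by omega) (by omega)
      rw [Finset.sum_Icc_succ_top (by omega)]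
      have hfo := ogd_first_order _ (hconv _ hm) (hdiff _ hm) (x (n + 1)) y
      have hst := ogd_step K hKconv _ _ y (hstep _ hm).1 hy (hstep _ hm).2
      have hg := hgrad _ hm _ hxm
      have hD := hdiam _ hxm _ hy
      have he := hη (n + 1)
      set g := gradient (f (n + 1)) (x (n + 1)) with hgdef
      rw [sub_right_comm, norm_sub_sq_real (x (n + 1) - y), inner_smul_right, norm_smul, mul_pow,
        Real.norm_eq_abs, sq_abs, real_inner_comm] at hst
      set r := Real.sqrt ((n + 1 : ℕ) : ℝ) with hr
      set q := Real.sqrt (n : ℝ) with hq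
      have hr0 : 0 < r := Real.sqrt_pos.2 (by positivity)
      have hq0 : 0 ≤ q := Real.sqrt_nonneg _
      have hr2 : r ^ 2 = n + 1 := by rw [hr, Real.sq_sqrt (by positivity)]; push_cast; ring
      have hq2 : q ^ 2 = n := Real.sq_sqrt (by positivity)
      have hqr : q ≤ r := by nlinarith
      have hg2 : ‖g‖ ^ 2 ≤ G ^ 2 := by gcongr
      have hD2 : ‖x (n + 1) - y‖ ^ 2 ≤ d ^ 2 := by gcongr
      set a := ‖x (n + 1) - y‖ ^ 2
      set b := ‖x (n + 1 + 1) - y‖ ^ 2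
      set i := inner ℝ g (x (n + 1) - y)
      have h1 : i + G * r / (2 * d) * b ≤ G * r / (2 * d) * a + d * G / (2 * r) := by
        have hc : 0 ≤ G * r / (2 * d) := by positivity
        have h := mul_le_mul_of_nonneg_left hst hc
        have e1 : G * r / (2 * d) * (a - 2 * (η (n + 1) * i) + η (n + 1) ^ 2 * ‖g‖ ^ 2)
            = G * r / (2 * d) * a - i + d / (2 * G * r) * ‖g‖ ^ 2 := by
          rw [he]; field_simp
        have e2 : d / (2 * G * r) * ‖g‖ ^ 2 ≤ d / (2 * G * r) * G ^ 2 := by gcongr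
        have e3 : d / (2 * G * r) * G ^ 2 = d * G / (2 * r) := by field_simp
        linarith
      have h2 : (G * r / (2 * d) - G * q / (2 * d)) * a ≤ G * d / 2 * (r - q) := by
        have e : G * d / 2 * (r - q) = (G * r / (2 * d) - G * q / (2 * d)) * d ^ 2 := by
          field_simp
        rw [e]
        apply mul_le_mul_of_nonneg_left hD2
        rw [sub_nonneg]; gcongr
      have h3 : d * G / (2 * r) ≤ G * d * (r - q) := by
        rw [div_le_iff₀ (by positivity)]
        have : 1 ≤ (r - q) * (2 * r) := by nlinarith
        have hGd : 0 < G * d := by positivity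
        nlinarith
      linarith
  have h := key T le_rfl
  rw [← Finset.sum_sub_distrib]
  have h0 : 0 ≤ G * Real.sqrt T / (2 * d) * ‖x (T + 1) - y‖ ^ 2 := by positivity
  have h1 : 0 ≤ G * d * Real.sqrt T := by positivity
  linarith
end
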